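/- For every k ≥ 1, every selection (S_1, ..., S_k) of level k, every positive multiple m' of p_{k+1}, and every residue class y modulo p_{k+1}, the number of integers n with 1 ≤ n ≤ m' · m_k such that n is permitted for the selection and n ≡ y (mod p_{k+1}) equals (m'/p_{k+1}) · c_k, where c_k = (p_1 − 1)(p_2 − 2)⋯(p_k − 2). -/

import Mathlib

/-- The `h`-th prime number (1-indexed): `nthPrime 1 = 2`, `nthPrime 2 = 3`, ... -/
noncomputable def nthPrime (h : ℕ) : ℕ := Nat.nth Nat.Prime (h - 1)

/-- `mK k = p_1 * p_2 * ⋯ * p_k`, the product of the first `k` primes. -/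
noncomputable def mK (k : ℕ) : ℕ := ∏ h ∈ Finset.Icc 1 k, nthPrime h

/-- `cK k = (p_1 - 1) * (p_2 - 2) * ⋯ * (p_k - 2)`. -/
noncomputable def cK (k : ℕ) : ℕ := (nthPrime 1 - 1) * ∏ h ∈ Finset.Icc 2 k, (nthPrime h - 2)

/-- A selection of level `k`: a family of sets of residues `S h ⊆ {0, …, p_h - 1}`
with `|S 1| = 1` and `|S h| = 2` for `2 ≤ h ≤ k`. -/
def IsSelection (k : ℕ) (S : ℕ → Finset ℕ) : Prop :=
  (∀ h, 1 ≤ h → h ≤ k → S h ⊆ Finset.range (nthPrime h)) ∧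
    (S 1).card = 1 ∧ ∀ h, 2 ≤ h → h ≤ k → (S h).card = 2

/-- `n` is permitted for a selection of level `k` if for every `1 ≤ h ≤ k` the residue of
`n` modulo `p_h` is not a selected remainder. -/
def Permitted (k : ℕ) (S : ℕ → Finset ℕ) (n : ℕ) : Prop :=
  ∀ h ∈ Finset.Icc 1 k, n % nthPrime h ∉ S h

noncomputable instance (k : ℕ) (S : ℕ → Finset ℕ) : DecidablePred (Permitted k S) := fun n =>
  inferInstanceAs (Decidable (∀ h ∈ Finset.Icc 1 k, n % nthPrime h ∉ S h))

/-- The density `δ_k = c_k · p_k / m_k` of permitted `k`-tuples within a period. -/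
noncomputable def deltaK (k : ℕ) : ℝ := (cK k : ℝ) * nthPrime k / mK k

/-!
Both conditions on `n`, avoiding `S_h` modulo `p_h` for `h ≤ k` and being `y` modulo `p_{k+1}`,
prescribe a set of residues modulo each of the first `k + 1` primes. By the Chinese remainder
theorem the solutions modulo `m_k * p_{k+1}` correspond to the choices of one residue from each set,
so a period contains `c_k * 1` of them, and `[1, m' * m_k]` consists of `m' / p_{k+1}` such periods.
-/

open Finset
open scoped Function

section ChineseRemainder

variable {ι : Type*} {s : Finset ι} {m : ι → ℕ}

theorem modEq_prod_of_forall_modEq (hm : (s : Set ι).Pairwise (Nat.Coprime on m)) {a b : ℕ}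
    (h : ∀ i ∈ s, a ≡ b [MOD m i]) : a ≡ b [MOD ∏ i ∈ s, m i] := by
  rw [Nat.modEq_iff_dvd, Nat.cast_prod]
  exact Finset.prod_dvd_of_coprime (fun i hi j hj hij ↦ (hm hi hj hij).isCoprime)
    fun i hi ↦ (h i hi).dvd

theorem exists_lt_prod_forall_mod_eq (hm : (s : Set ι).Pairwise (Nat.Coprime on m)) {r : ι → ℕ}
    (hr : ∀ i ∈ s, r i < m i) : ∃ n < ∏ i ∈ s, m i, ∀ i ∈ s, n % m i = r i := by
  have hm₀ : ∀ i ∈ s, m i ≠ 0 := fun i hi ↦ Nat.ne_zero_of_lt (hr i hi)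
  exact ⟨Nat.chineseRemainderOfFinset r m s hm₀ hm,
    Nat.chineseRemainderOfFinset_lt_prod r m hm₀ hm,
    fun i hi ↦ Nat.mod_eq_of_modEq ((Nat.chineseRemainderOfFinset r m s hm₀ hm).2 i hi) (hr i hi)⟩

variable {A : ι → Finset ℕ}

theorem count_forall_mod_mem (hm : (s : Set ι).Pairwise (Nat.Coprime on m))
    (hA : ∀ i ∈ s, A i ⊆ range (m i)) :
    Nat.count (fun n ↦ ∀ i ∈ s, n % m i ∈ A i) (∏ i ∈ s, m i) = ∏ i ∈ s, #(A i) := by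
  classical
  rw [Nat.count_eq_card_filter_range, ← card_pi]
  refine card_bij (fun n _ i _ ↦ n % m i) ?maps ?injective ?surjective
  case maps =>
    intro n hn
    exact mem_pi.2 (mem_filter.1 hn).2
  case injective =>
    intro a ha b hb hab
    have hmod : a ≡ b [MOD ∏ i ∈ s, m i] :=
      modEq_prod_of_forall_modEq hm fun i hi ↦ congrFun (congrFun hab i) hi
    exact hmod.eq_of_lt_of_lt (mem_range.1 (mem_filter.1 ha).1) (mem_range.1 (mem_filter.1 hb).1)
  case surjective =>
    intro f hf
    rw [mem_pi] at hf
    obtain ⟨n, hn, hnf⟩ := exists_lt_prod_forall_mod_eq hm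
      (r := fun i ↦ if hi : i ∈ s then f i hi else 0)
      fun i hi ↦ by simpa [hi] using hA i hi (hf i hi)
    have hnf' : ∀ i (hi : i ∈ s), n % m i = f i hi := fun i hi ↦ by simpa [hi] using hnf i hi
    refine ⟨n, mem_filter.2 ⟨mem_range.2 hn, fun i hi ↦ ?_⟩, funext₂ hnf'⟩
    exact hnf' i hi ▸ hf i hi

theorem periodic_forall_mod_mem :
    Function.Periodic (fun n ↦ ∀ i ∈ s, n % m i ∈ A i) (∏ i ∈ s, m i) := fun n ↦
  propext <| forall₂_congr fun i hi ↦ by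
    rw [(Nat.modEq_zero_iff_dvd.2 (dvd_prod_of_mem m hi)).add_left n, add_zero]

end ChineseRemainder

theorem card_filter_Ico_mul_of_periodic {P : ℕ → Prop} [DecidablePred P] {a : ℕ}
    (hP : Function.Periodic P a) (n t : ℕ) :
    #{x ∈ Ico n (n + t * a) | P x} = t * Nat.count P a := by
  have hcount : Nat.count P (t * a) = t * Nat.count P a := by
    induction t with
    | zero => simp
    | succ t ih =>
      have hshift : (fun x ↦ P (t * a + x)) = P :=
        funext fun x ↦ by rw [add_comm]; exact hP.nat_mul t x
      simp only [Nat.succ_mul, Nat.count_add, ih, hshift]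
  exact (Nat.filter_Ico_card_eq_of_periodic n (t * a) P (hP.nat_mul t)).trans hcount

theorem prime_nthPrime (h : ℕ) : (nthPrime h).Prime := Nat.prime_nth_prime _

theorem pairwise_coprime_nthPrime : (Set.Ici 1).Pairwise (Nat.Coprime on nthPrime) := by
  intro i hi j hj hij
  refine (Nat.coprime_primes (prime_nthPrime i) (prime_nthPrime j)).2 fun heq ↦ hij ?_
  exact Nat.sub_one_cancel hi hj (Nat.nth_injective Nat.infinite_setOfPred_prime heq)

theorem mK_succ (k : ℕ) : mK (k + 1) = mK k * nthPrime (k + 1) :=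
  prod_Icc_succ_top (by lia) _

/-- The residues modulo `p_h` that a permitted integer in the class of `y` modulo `p_{k+1}` may
have: those outside `S h` for `h ≤ k`, and only `y` for `h = k + 1` (the value for `h > k + 1` is
irrelevant). -/
noncomputable def admissibleResidues (k : ℕ) (S : ℕ → Finset ℕ) (y h : ℕ) : Finset ℕ :=
  if h ≤ k then range (nthPrime h) \ S h else {y}

section AdmissibleResidues

variable {k : ℕ} {S : ℕ → Finset ℕ} {y : ℕ}

theorem admissibleResidues_of_le {h : ℕ} (hh : h ≤ k) :
    admissibleResidues k S y h = range (nthPrime h) \ S h := if_pos hh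

theorem admissibleResidues_succ : admissibleResidues k S y (k + 1) = {y} := if_neg (by lia)

theorem permitted_and_mod_eq_iff {n : ℕ} :
    Permitted k S n ∧ n % nthPrime (k + 1) = y ↔
      ∀ h ∈ Icc 1 (k + 1), n % nthPrime h ∈ admissibleResidues k S y h := by
  rw [← insert_Icc_right_eq_Icc_add_one (by lia), forall_mem_insert, admissibleResidues_succ,
    mem_singleton, and_comm]
  refine and_congr_right' (forall₂_congr fun h hh ↦ ?_)
  rw [admissibleResidues_of_le (mem_Icc.1 hh).2, mem_sdiff, mem_range]
  exact (and_iff_right (Nat.mod_lt _ (prime_nthPrime h).pos)).symm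

theorem admissibleResidues_subset_range (hy : y < nthPrime (k + 1)) {h : ℕ} (hh : h ≤ k + 1) :
    admissibleResidues k S y h ⊆ range (nthPrime h) := by
  obtain hle | rfl := Nat.le_succ_iff.1 hh
  · rw [admissibleResidues_of_le hle]
    exact sdiff_subset
  · rwa [admissibleResidues_succ, singleton_subset_iff, mem_range]

theorem prod_card_admissibleResidues (hk : 1 ≤ k) (hS : IsSelection k S) :
    ∏ h ∈ Icc 1 (k + 1), #(admissibleResidues k S y h) = cK k := by
  obtain ⟨hsub, hone, htwo⟩ := hS
  have hcard : ∀ h ∈ Icc 1 k, #(admissibleResidues k S y h) = nthPrime h - #(S h) := by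
    intro h hh
    obtain ⟨h₁, hle⟩ := mem_Icc.1 hh
    rw [admissibleResidues_of_le hle, card_sdiff_of_subset (hsub h h₁ hle), card_range]
  calc ∏ h ∈ Icc 1 (k + 1), #(admissibleResidues k S y h)
      = ∏ h ∈ Icc 1 k, (nthPrime h - #(S h)) := by
        rw [prod_Icc_succ_top (by lia), admissibleResidues_succ, card_singleton, mul_one,
          prod_congr rfl hcard]
    _ = (nthPrime 1 - #(S 1)) * ∏ h ∈ Icc 2 k, (nthPrime h - #(S h)) := by
        rw [← insert_Icc_add_one_left_eq_Icc hk, prod_insert (by simp), one_add_one_eq_two]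
    _ = cK k := by
        rw [hone, cK]
        congr 1
        refine prod_congr rfl fun h hh ↦ ?_
        rw [htwo h (mem_Icc.1 hh).1 (mem_Icc.1 hh).2]

end AdmissibleResidues

/-- For `m'` a positive multiple of `p_{k+1}`, the permitted integers in `m'` periods of
`S_k` are uniformly distributed over the residue classes modulo `p_{k+1}`: for every residue
`y`, the number of permitted `n ∈ [1, m' · m_k]` with `n ≡ y (mod p_{k+1})` equals
`(m'/p_{k+1}) · c_k`. -/
theorem permitted_uniform_distribution_multiple (k : ℕ) (hk : 1 ≤ k) (S : ℕ → Finset ℕ)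
    (hS : IsSelection k S) (m' : ℕ) (hm' : 0 < m') (hdvd : nthPrime (k + 1) ∣ m')
    (y : ℕ) (hy : y < nthPrime (k + 1)) :
    ((Finset.Icc 1 (m' * mK k)).filter
      (fun n => Permitted k S n ∧ n % nthPrime (k + 1) = y)).card
      = (m' / nthPrime (k + 1)) * cK k := by
  obtain ⟨t, rfl⟩ := hdvd
  rw [Nat.mul_div_cancel_left t (prime_nthPrime _).pos]
  have hcoprime : (Icc 1 (k + 1) : Set ℕ).Pairwise (Nat.Coprime on nthPrime) :=
    pairwise_coprime_nthPrime.mono fun h hh ↦ (mem_Icc.1 hh).1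
  have hinterval : Icc 1 (nthPrime (k + 1) * t * mK k) = Ico 1 (1 + t * mK (k + 1)) := by
    rw [mK_succ, add_comm 1, Ico_add_one_right_eq_Icc]
    ring_nf
  simp only [permitted_and_mod_eq_iff, hinterval]
  calc #{n ∈ Ico 1 (1 + t * mK (k + 1)) |
          ∀ h ∈ Icc 1 (k + 1), n % nthPrime h ∈ admissibleResidues k S y h}
      = t * Nat.count (fun n ↦ ∀ h ∈ Icc 1 (k + 1), n % nthPrime h ∈ admissibleResidues k S y h)
          (mK (k + 1)) := card_filter_Ico_mul_of_periodic periodic_forall_mod_mem 1 t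
    _ = t * ∏ h ∈ Icc 1 (k + 1), #(admissibleResidues k S y h) := by
        rw [mK, count_forall_mod_mem hcoprime fun h hh ↦
          admissibleResidues_subset_range hy (mem_Icc.1 hh).2]
    _ = t * cK k := by rw [prod_card_admissibleResidues hk hS]
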